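/- Let n ≥ 8 and m = n−4, with t₁,...,t_m ∈ Sym(2n) as defined (t₁ = (2,3)(n+2,n+3)(4,5)(n+4,n+5)∏_{i=6}^{n}(i,n+i), t₂ = (1,2)(n+1,n+2)(3,4)(n+3,n+4)(5,6)(n+5,n+6)∏_{i=7}^{n}(i,n+i), t₃ = (2,3)(n+2,n+3)(6,7)(n+6,n+7), t_k = (k+3,k+4)(n+k+3,n+k+4) for 4 ≤ k ≤ m). Then (t₁t₂⋯t_m t₃t₄)ⁿ = ∏_{i=1}^{n}(i, n+i). -/

import Mathlib

open Equiv

/-- The generators `t₁, …, t_m` (`m = n − 4`) of the second family, as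
permutations of `ℕ` (elements of `Sym(2n)` on `{1,…,2n}`):
`t₁ = (2,3)(n+2,n+3)(4,5)(n+4,n+5)∏_{i=6}^{n}(i,n+i)`,
`t₂ = (1,2)(n+1,n+2)(3,4)(n+3,n+4)(5,6)(n+5,n+6)∏_{i=7}^{n}(i,n+i)`,
`t₃ = (2,3)(n+2,n+3)(6,7)(n+6,n+7)`, and
`t_k = (k+3,k+4)(n+k+3,n+k+4)` for `k ≥ 4`. -/
def t (n k : ℕ) : Equiv.Perm ℕ :=
  if k = 1 then
    Equiv.swap 2 3 * Equiv.swap (n+2) (n+3) * Equiv.swap 4 5 * Equiv.swap (n+4) (n+5) *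
      ((List.range (n - 5)).map (fun j => Equiv.swap (6 + j) (n+6+j))).prod
  else if k = 2 then
    Equiv.swap 1 2 * Equiv.swap (n+1) (n+2) * Equiv.swap 3 4 * Equiv.swap (n+3) (n+4) *
      Equiv.swap 5 6 * Equiv.swap (n+5) (n+6) *
      ((List.range (n - 6)).map (fun j => Equiv.swap (7 + j) (n+7+j))).prod
  else if k = 3 then
    Equiv.swap 2 3 * Equiv.swap (n+2) (n+3) * Equiv.swap 6 7 * Equiv.swap (n+6) (n+7)
  else
    Equiv.swap (k+3) (k+4) * Equiv.swap (n+k+3) (n+k+4)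

/-- The product `t₁t₂⋯t_k` of the first `k` generators in increasing order. -/
def tProd (n k : ℕ) : Equiv.Perm ℕ :=
  ((List.range k).map (fun i => t n (i+1))).prod

/-- `∏_{i=1}^{k}(i, n+i)`. -/
def bigSwap (n k : ℕ) : Equiv.Perm ℕ :=
  ((List.range k).map (fun i => Equiv.swap (i+1) (n+(i+1)))).prod

/-! The generators lie in the hyperoctahedral group of signed permutations, where `n + i` plays the
role of `-i`; it is generated by the doubled adjacent transpositions `sᵢ` and the sign changes
`eᵢ`, and its element `-1` is `bigSwap n n`. The sign changes in `t₁t₂` cancel up to a single one,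
and the braid relations turn the whole word into
`s₇ (s₂s₄s₁s₃ e₆ s₅s₆⋯sₙ₋₁) s₇`. Moving one letter at a time from the end of the word to its front
is a conjugation, and conjugating by an element commuting with `-1` does not affect whether the
`n`-th power is `-1`. In this way the word becomes the Coxeter element `e₁s₁s₂⋯sₙ₋₁` of type `Bₙ`,
which is the rotation `1 ↦ 2 ↦ ⋯ ↦ 2n ↦ 1`; its `n`-th power is `x ↦ x ± n`. -/

section Group

variable {G : Type*} [Group G] {k : ℕ}

lemma mul_pow_eq_iff_of_commute {a b z : G} (hb : Commute b z) :
    (a * b) ^ k = z ↔ (b * a) ^ k = z := by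
  have conj : (b * a) ^ k = b * (a * b) ^ k * b⁻¹ := by
    rw [← conj_pow]
    group
  rw [conj, mul_inv_eq_iff_eq_mul, ← hb.eq, mul_right_inj]

lemma zigzag_pow_eq_iff {a b c d r z : G} (hac : Commute a c) (had : Commute a d)
    (hbd : Commute b d) (har : Commute a r) (hbr : Commute b r) (hcr : Commute c r)
    (haz : Commute a z) (hbz : Commute b z) (hcz : Commute c z) :
    (b * d * a * c * r) ^ k = z ↔ (a * b * c * d * r) ^ k = z :=
  calc (b * d * a * c * r) ^ k = z
    _ ↔ (b * d * a * r * c) ^ k = z := by rw [hcr.right_comm]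
    _ ↔ (c * (b * d * r * a)) ^ k = z := by
      rw [mul_pow_eq_iff_of_commute hcz, har.right_comm]
    _ ↔ (c * (b * d * r) * a) ^ k = z := by rw [mul_assoc c]
    _ ↔ (a * (c * (b * (d * r)))) ^ k = z := by
      rw [mul_pow_eq_iff_of_commute haz, mul_assoc b]
    _ ↔ (a * c * (d * r) * b) ^ k = z := by
      rw [(hbd.mul_right hbr).eq]
      simp only [mul_assoc]
    _ ↔ (b * (a * (c * (d * r)))) ^ k = z := by
      rw [mul_pow_eq_iff_of_commute hbz, mul_assoc a]
    _ ↔ (b * (c * (d * r)) * a) ^ k = z := by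
      rw [(hac.mul_right (had.mul_right har)).eq]
      simp only [mul_assoc]
    _ ↔ (a * b * c * d * r) ^ k = z := by
      rw [mul_pow_eq_iff_of_commute haz]
      simp only [mul_assoc]

end Group

lemma mul_swap_mul_swap {α : Type*} [DecidableEq α] (g : Perm α) (a b c d : α) :
    g * (swap a b * swap c d) = swap (g a) (g b) * swap (g c) (g d) * g := by
  rw [← mul_assoc, mul_swap_eq_swap_mul g, mul_assoc _ g, mul_swap_eq_swap_mul g, ← mul_assoc]

/-- The doubled adjacent transposition `sᵢ = (i, i+1)(n+i, n+i+1)` of the hyperoctahedral group. -/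
def adjSwap (n i : ℕ) : Perm ℕ :=
  swap i (i + 1) * swap (n + i) (n + i + 1)

/-- The sign change `eᵢ = (i, n+i)` of the hyperoctahedral group. -/
def signSwap (n i : ℕ) : Perm ℕ :=
  swap i (n + i)

/-- The product `sₐsₐ₊₁⋯` of `r` consecutive doubled adjacent transpositions, a cycle on each of
the two copies of `{a, …, a+r}`. -/
def adjSwapProd (n a r : ℕ) : Perm ℕ :=
  ((List.range' a r).map (adjSwap n)).prod

/-- The product `eₐeₐ₊₁⋯` of `r` consecutive sign changes. -/
def signSwapProd (n a r : ℕ) : Perm ℕ :=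
  ((List.range' a r).map (signSwap n)).prod

section Relations

variable {n i j a r : ℕ} {g : Perm ℕ}

lemma adjSwap_apply_of_ne {x : ℕ} (h₁ : x ≠ i) (h₂ : x ≠ i + 1) (h₃ : x ≠ n + i)
    (h₄ : x ≠ n + i + 1) : adjSwap n i x = x := by
  rw [adjSwap, Perm.mul_apply, swap_apply_of_ne_of_ne h₃ h₄, swap_apply_of_ne_of_ne h₁ h₂]

lemma signSwap_apply_of_ne {x : ℕ} (h₁ : x ≠ i) (h₂ : x ≠ n + i) : signSwap n i x = x :=
  swap_apply_of_ne_of_ne h₁ h₂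

lemma adjSwap_mul_self (hn : 2 ≤ n) : adjSwap n i * adjSwap n i = 1 := by
  ext x
  simp only [adjSwap, Perm.mul_apply, swap_apply_def, Perm.one_apply]
  grind

lemma mul_adjSwap (h₁ : g i = j) (h₂ : g (i + 1) = j + 1) (h₃ : g (n + i) = n + j)
    (h₄ : g (n + i + 1) = n + j + 1) : g * adjSwap n i = adjSwap n j * g := by
  rw [adjSwap, mul_swap_mul_swap, h₁, h₂, h₃, h₄, adjSwap]

lemma mul_signSwap (h₁ : g i = j) (h₂ : g (n + i) = n + j) :
    g * signSwap n i = signSwap n j * g := by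
  rw [signSwap, mul_swap_eq_swap_mul, h₁, h₂, signSwap]

lemma commute_adjSwap_adjSwap (hi : 1 ≤ i) (hij : i + 2 ≤ j) (hj : j < n) :
    Commute (adjSwap n i) (adjSwap n j) := by
  apply mul_adjSwap <;> apply adjSwap_apply_of_ne <;> omega

lemma commute_signSwap_adjSwap (hi : 1 ≤ i) (hin : i ≤ n) (hj : 1 ≤ j) (hjn : j < n) (hij : i ≠ j)
    (hij' : i ≠ j + 1) : Commute (signSwap n i) (adjSwap n j) := by
  apply mul_adjSwap <;> apply signSwap_apply_of_ne <;> omega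

lemma adjSwapProd_succ : adjSwapProd n a (r + 1) = adjSwap n a * adjSwapProd n (a + 1) r := by
  simp [adjSwapProd, List.range'_succ]

lemma adjSwapProd_apply {x : ℕ} (ha : 1 ≤ a) (h : a + r ≤ n) :
    adjSwapProd n a r x =
      if a ≤ x ∧ x < a + r ∨ n + a ≤ x ∧ x < n + a + r then x + 1
      else if x = a + r ∨ x = n + a + r then x - r else x := by
  induction r generalizing a with
  | zero => simp [adjSwapProd]
  | succ r ih =>
    rw [adjSwapProd_succ, Perm.mul_apply, ih (by omega) (by omega), adjSwap, Perm.mul_apply]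
    simp only [swap_apply_def]
    grind

lemma adjSwapProd_mul_adjSwap (ha : 1 ≤ a) (h : a + r ≤ n) (hi : a ≤ i) (hir : i + 1 < a + r) :
    adjSwapProd n a r * adjSwap n i = adjSwap n (i + 1) * adjSwapProd n a r := by
  apply mul_adjSwap <;> rw [adjSwapProd_apply ha h] <;> split_ifs <;> omega

lemma adjSwapProd_mul_signSwap (ha : 1 ≤ a) (h : a + r ≤ n) (hi : a ≤ i) (hir : i < a + r) :
    adjSwapProd n a r * signSwap n i = signSwap n (i + 1) * adjSwapProd n a r := by
  apply mul_signSwap <;> rw [adjSwapProd_apply ha h] <;> split_ifs <;> omega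

lemma commute_adjSwap_adjSwapProd (hi : 1 ≤ i) (hia : i + 2 ≤ a) (h : a + r ≤ n) :
    Commute (adjSwap n i) (adjSwapProd n a r) := by
  symm
  apply mul_adjSwap <;> rw [adjSwapProd_apply (by omega) h] <;> split_ifs <;> omega

lemma signSwapProd_succ : signSwapProd n a (r + 1) = signSwap n a * signSwapProd n (a + 1) r := by
  simp [signSwapProd, List.range'_succ]

lemma signSwapProd_apply {x : ℕ} (ha : 1 ≤ a) (h : a + r ≤ n + 1) :
    signSwapProd n a r x =
      if a ≤ x ∧ x < a + r then x + n
      else if n + a ≤ x ∧ x < n + a + r then x - n else x := by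
  induction r generalizing a with
  | zero =>
    simp only [signSwapProd, List.range'_zero, List.map_nil, List.prod_nil, Perm.one_apply]
    split_ifs <;> omega
  | succ r ih =>
    rw [signSwapProd_succ, Perm.mul_apply, ih (by omega) (by omega), signSwap, swap_apply_def]
    split_ifs <;> omega

lemma signSwapProd_mul_self (ha : 1 ≤ a) (h : a + r ≤ n + 1) :
    signSwapProd n a r * signSwapProd n a r = 1 := by
  ext x
  simp only [Perm.mul_apply, signSwapProd_apply ha h, Perm.one_apply]
  split_ifs <;> omega

lemma commute_adjSwap_signSwapProd (hi : 1 ≤ i) (hia : i + 2 ≤ a) (h : a + r ≤ n + 1) :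
    Commute (adjSwap n i) (signSwapProd n a r) := by
  symm
  apply mul_adjSwap <;> rw [signSwapProd_apply (by omega) h] <;> split_ifs <;> omega

end Relations

section Antipode

variable {n i : ℕ}

lemma bigSwap_eq_signSwapProd (n k : ℕ) : bigSwap n k = signSwapProd n 1 k := by
  simp [bigSwap, signSwapProd, signSwap, List.range'_eq_map_range, Function.comp_def, add_comm]

lemma bigSwap_apply {x : ℕ} :
    bigSwap n n x =
      if 1 ≤ x ∧ x ≤ n then x + n else if n + 1 ≤ x ∧ x ≤ 2 * n then x - n else x := by
  rw [bigSwap_eq_signSwapProd, signSwapProd_apply le_rfl (by omega)]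
  split_ifs <;> omega

lemma bigSwap_apply_pos (hi : 1 ≤ i) (hin : i ≤ n) : bigSwap n n i = n + i := by
  rw [bigSwap_apply, if_pos ⟨hi, hin⟩, add_comm]

lemma bigSwap_apply_neg (hi : 1 ≤ i) (hin : i ≤ n) : bigSwap n n (n + i) = i := by
  rw [bigSwap_apply, if_neg (by omega), if_pos (by omega), Nat.add_sub_cancel_left]

lemma commute_signSwap_bigSwap (hi : 1 ≤ i) (hin : i ≤ n) :
    Commute (signSwap n i) (bigSwap n n) := by
  symm
  rw [Commute, SemiconjBy, signSwap, mul_swap_eq_swap_mul, bigSwap_apply_pos hi hin,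
    bigSwap_apply_neg hi hin, swap_comm]

lemma commute_adjSwap_bigSwap (hi : 1 ≤ i) (hin : i < n) :
    Commute (adjSwap n i) (bigSwap n n) := by
  have copies_commute : Commute (swap i (i + 1)) (swap (n + i) (n + i + 1)) := by
    rw [Commute, SemiconjBy, mul_swap_eq_swap_mul, swap_apply_of_ne_of_ne (by omega) (by omega),
      swap_apply_of_ne_of_ne (by omega) (by omega)]
  symm
  rw [Commute, SemiconjBy, adjSwap, mul_swap_mul_swap, bigSwap_apply_pos hi hin.le,
    bigSwap_apply_neg hi hin.le, add_assoc, bigSwap_apply_pos (i := i + 1) (by omega) hin,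
    bigSwap_apply_neg (i := i + 1) (by omega) hin, ← add_assoc, copies_commute.eq]

end Antipode

/-- The Coxeter element `e₁s₁s₂⋯sₙ₋₁` of the hyperoctahedral group, a `2n`-cycle. -/
def coxeterElement (n : ℕ) : Perm ℕ :=
  signSwap n 1 * adjSwapProd n 1 (n - 1)

section CoxeterElement

variable {n k : ℕ}

lemma coxeterElement_apply (hn : 1 ≤ n) (x : ℕ) :
    coxeterElement n x =
      if 1 ≤ x ∧ x < 2 * n then x + 1 else if x = 2 * n then 1 else x := by
  rw [coxeterElement, Perm.mul_apply, adjSwapProd_apply le_rfl (by omega), signSwap, swap_apply_def]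
  split_ifs <;> omega

lemma coxeterElement_pow_apply (hn : 1 ≤ n) (hk : k ≤ 2 * n) (x : ℕ) :
    (coxeterElement n ^ k) x =
      if 1 ≤ x ∧ x + k ≤ 2 * n then x + k
      else if 1 ≤ x ∧ x ≤ 2 * n then x + k - 2 * n else x := by
  induction k with
  | zero =>
    rw [pow_zero, Perm.one_apply]
    split_ifs <;> omega
  | succ k ih =>
    rw [pow_succ', Perm.mul_apply, ih (by omega), coxeterElement_apply hn]
    split_ifs <;> omega

lemma coxeterElement_pow (hn : 1 ≤ n) :
    coxeterElement n ^ n = bigSwap n n := by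
  ext x
  rw [coxeterElement_pow_apply hn (by omega), bigSwap_apply]
  split_ifs <;> omega

lemma signSwap_mul_adjSwapProd_pow (hk : 1 ≤ k) (hkn : k ≤ n) :
    (signSwap n k * adjSwapProd n 1 (n - 1)) ^ n = bigSwap n n := by
  induction k, hk using Nat.le_induction with
  | base => exact coxeterElement_pow hkn
  | succ k hk ih =>
    rw [← adjSwapProd_mul_signSwap le_rfl (by omega) hk (by omega),
      mul_pow_eq_iff_of_commute (commute_signSwap_bigSwap hk (by omega))]
    exact ih (by omega)

end CoxeterElement

section Generators

variable {n : ℕ}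

lemma t_one (hn : 6 ≤ n) :
    t n 1 = adjSwap n 2 * adjSwap n 4 * (signSwap n 6 * signSwapProd n 7 (n - 6)) := by
  rw [← signSwapProd_succ, show n - 6 + 1 = n - 5 by omega]
  simp [t, adjSwap, signSwapProd, signSwap, List.range'_eq_map_range, Function.comp_def, mul_assoc,
    add_assoc]

lemma t_two :
    t n 2 = adjSwap n 1 * adjSwap n 3 * adjSwap n 5 * signSwapProd n 7 (n - 6) := by
  simp [t, adjSwap, signSwapProd, signSwap, List.range'_eq_map_range, Function.comp_def, mul_assoc,
    add_assoc]

lemma t_three : t n 3 = adjSwap n 2 * adjSwap n 6 := by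
  simp [t, adjSwap, mul_assoc]

lemma t_add_four (i : ℕ) : t n (i + 4) = adjSwap n (i + 7) := by
  simp [t, adjSwap, add_assoc]

lemma tProd_add_three (r : ℕ) :
    tProd n (r + 3) = t n 1 * t n 2 * t n 3 * adjSwapProd n 7 r := by
  have tail_eq : adjSwapProd n 7 r = ((List.range r).map fun i => t n (3 + i + 1)).prod := by
    simp [adjSwapProd, List.range'_eq_map_range, Function.comp_def, add_comm 7, ← t_add_four,
      show ∀ i, 3 + i + 1 = i + 4 by omega]
  rw [tail_eq, tProd, add_comm r, List.range_add]
  simp [List.range_succ, Function.comp_def, mul_assoc]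

lemma t_one_mul_t_two (hn : 6 ≤ n) :
    t n 1 * t n 2 = adjSwap n 2 * adjSwap n 4 * adjSwap n 1 * adjSwap n 3 *
      (signSwap n 6 * adjSwap n 5) := by
  set z := signSwapProd n 7 (n - 6) with hz
  have z_comm : Commute (adjSwap n 1 * adjSwap n 3 * adjSwap n 5) z := by
    refine .mul_left (.mul_left ?_ ?_) ?_ <;> apply commute_adjSwap_signSwapProd <;> omega
  have e_comm : Commute (signSwap n 6) (adjSwap n 1 * adjSwap n 3) := by
    refine .mul_right ?_ ?_ <;> apply commute_signSwap_adjSwap <;> omega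
  calc t n 1 * t n 2
    _ = adjSwap n 2 * adjSwap n 4 * (signSwap n 6 *
          (z * ((adjSwap n 1 * adjSwap n 3 * adjSwap n 5) * z))) := by
      rw [t_one hn, t_two]
      simp only [mul_assoc, hz]
    _ = adjSwap n 2 * adjSwap n 4 * (signSwap n 6 *
          (adjSwap n 1 * adjSwap n 3 * adjSwap n 5)) := by
      rw [z_comm.eq, ← mul_assoc z, signSwapProd_mul_self (by omega) (by omega), one_mul]
    _ = adjSwap n 2 * adjSwap n 4 * adjSwap n 1 * adjSwap n 3 * (signSwap n 6 * adjSwap n 5) := by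
      rw [← mul_assoc (signSwap n 6), e_comm.eq]
      simp only [mul_assoc]

lemma tProd_mul_t_three_mul_t_four (hn : 8 ≤ n) :
    tProd n (n - 4) * t n 3 * t n 4 = adjSwap n 7 * (adjSwap n 2 * adjSwap n 4 * adjSwap n 1 *
      adjSwap n 3 * (signSwap n 6 * adjSwapProd n 5 (n - 5)) * adjSwap n 7) := by
  set w := adjSwap n 2 * adjSwap n 4 * adjSwap n 1 * adjSwap n 3 * signSwap n 6 with hw
  set R := adjSwapProd n 5 (n - 5) with hR
  have s₂_comm : Commute (adjSwap n 2) (adjSwap n 6 * adjSwapProd n 7 (n - 7)) :=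
    .mul_right (commute_adjSwap_adjSwap (by omega) (by omega) (by omega))
      (commute_adjSwap_adjSwapProd (by omega) (by omega) (by omega))
  have R_eq : adjSwap n 5 * (adjSwap n 6 * adjSwapProd n 7 (n - 7)) = R := by
    rw [hR, show n - 5 = n - 7 + 1 + 1 by omega, adjSwapProd_succ, adjSwapProd_succ]
  have w_comm : Commute w (adjSwap n 7) := by
    refine .mul_left (.mul_left (.mul_left (.mul_left ?_ ?_) ?_) ?_) ?_
    iterate 4 exact commute_adjSwap_adjSwap (by omega) (by omega) (by omega)
    exact commute_signSwap_adjSwap (by omega) (by omega) (by omega) (by omega) (by omega)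
      (by omega)
  calc tProd n (n - 4) * t n 3 * t n 4
    _ = w * (adjSwap n 5 * (adjSwap n 2 * (adjSwap n 6 * adjSwapProd n 7 (n - 7)) *
          adjSwap n 2)) * adjSwap n 6 * adjSwap n 7 := by
      rw [show n - 4 = n - 7 + 3 by omega, tProd_add_three, t_one_mul_t_two (by omega), t_three,
        t_add_four 0]
      simp only [mul_assoc, hw]
    _ = w * R * adjSwap n 6 * adjSwap n 7 := by
      rw [s₂_comm.eq, mul_assoc _ (adjSwap n 2), adjSwap_mul_self (by omega), mul_one, R_eq]
    _ = w * adjSwap n 7 * R * adjSwap n 7 := by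
      rw [mul_assoc w, hR, adjSwapProd_mul_adjSwap (by omega) (by omega) (by omega) (by omega)]
      simp only [mul_assoc]
    _ = _ := by
      rw [w_comm.eq]
      simp only [mul_assoc, hw]

lemma linear_word_eq_signSwap_mul_adjSwapProd (hn : 6 ≤ n) :
    adjSwap n 1 * adjSwap n 2 * adjSwap n 3 * adjSwap n 4 *
      (signSwap n 6 * adjSwapProd n 5 (n - 5)) = signSwap n 6 * adjSwapProd n 1 (n - 1) := by
  have e_comm : Commute (adjSwap n 1 * adjSwap n 2 * adjSwap n 3 * adjSwap n 4) (signSwap n 6) := by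
    symm
    refine .mul_right (.mul_right (.mul_right ?_ ?_) ?_) ?_ <;>
      apply commute_signSwap_adjSwap <;> omega
  rw [← mul_assoc, e_comm.eq, show n - 1 = n - 5 + 1 + 1 + 1 + 1 by omega]
  simp only [adjSwapProd_succ, mul_assoc]

lemma zigzag_word_pow (hn : 6 ≤ n) :
    (adjSwap n 2 * adjSwap n 4 * adjSwap n 1 * adjSwap n 3 *
      (signSwap n 6 * adjSwapProd n 5 (n - 5))) ^ n = bigSwap n n := by
  have commute_tail {i : ℕ} (hi : 1 ≤ i) (hi' : i ≤ 3) :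
      Commute (adjSwap n i) (signSwap n 6 * adjSwapProd n 5 (n - 5)) := by
    refine .mul_right (.symm ?_) (commute_adjSwap_adjSwapProd hi (by omega) (by omega))
    apply commute_signSwap_adjSwap <;> omega
  have commute_adj {i j : ℕ} (hi : 1 ≤ i) (hij : i + 2 ≤ j) (hj : j ≤ 4) :
      Commute (adjSwap n i) (adjSwap n j) :=
    commute_adjSwap_adjSwap hi hij (by omega)
  have commute_antipode {i : ℕ} (hi : 1 ≤ i) (hi' : i ≤ 3) :
      Commute (adjSwap n i) (bigSwap n n) :=
    commute_adjSwap_bigSwap hi (by omega)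
  rw [zigzag_pow_eq_iff (commute_adj le_rfl le_rfl (by decide))
    (commute_adj le_rfl (by decide) le_rfl) (commute_adj (by decide) le_rfl le_rfl)
    (commute_tail le_rfl (by decide)) (commute_tail (by decide) (by decide))
    (commute_tail (by decide) le_rfl) (commute_antipode le_rfl (by decide))
    (commute_antipode (by decide) (by decide)) (commute_antipode (by decide) le_rfl),
    linear_word_eq_signSwap_mul_adjSwapProd hn]
  exact signSwap_mul_adjSwapProd_pow (by omega) hn

end Generators

/-- `(t₁t₂⋯t_m t₃t₄)ⁿ = ∏_{i=1}^{n}(i, n+i)` for `n ≥ 8`, `m = n − 4`. -/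
theorem pow_n_eq (n : ℕ) (hn : 8 ≤ n) (m : ℕ) (hm : m = n - 4) :
    (tProd n m * t n 3 * t n 4) ^ n = bigSwap n n := by
  subst hm
  rw [tProd_mul_t_three_mul_t_four hn,
    ← mul_pow_eq_iff_of_commute (commute_adjSwap_bigSwap (by omega) (by omega)), mul_assoc,
    adjSwap_mul_self (by omega), mul_one]
  exact zigzag_word_pow (by omega)
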